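/- (Remark 2: bounded relative error with explicit constant in the zero-mean case) Let N ≥ 1 and λ_1,…,λ_N > 0, and suppose α_i = 0 for all i. For each γ_0 > 0 set σ_i(γ_0) = √(γ_0/(N λ_i)), let μ*_{γ_0} be the product measure on ℝ^N whose i-th factor is the centered Gaussian measure with variance σ_i(γ_0)², let L_{γ_0}(z) = ∏_{i=1}^N f(z_i)/f*_{i,γ_0}(z_i) where f is the standard Gaussian density and f*_{i,γ_0} the density of the centered Gaussian with variance σ_i(γ_0)², let P(γ_0) = μ{z : ∑_i λ_i z_i² ≤ γ_0} with μ the product of N standard Gaussian measures, and let M_2(γ_0) = ∫_{ℝ^N} 𝟙{∑_i λ_i z_i² ≤ γ_0} L_{γ_0}(z)² dμ*_{γ_0}(z). Then limsup_{γ_0 → 0⁺} M_2(γ_0)/P(γ_0)² ≤ (π e / 2)^N. -/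

import Mathlib

/-!
The bound holds, up to a factor tending to `1`, for every fixed `γ₀ > 0`. Write `σᵢ² = γ₀ / (N λᵢ)`.

* On the event `∑ λᵢ zᵢ² ≤ γ₀` one has `∑ zᵢ² / (2 σᵢ²) ≤ N / 2`, so the likelihood ratio is at most
  `∏ σᵢ e^{1/2}` and hence `M₂ ≤ ∏ σᵢ² e`, because the biased measure is a probability measure.
* The event contains the box `∏ [-σᵢ, σᵢ]`, on which the Gaussian density is at least its value at the
  corners, so `P ≥ ∏ 2 σᵢ (2π)^{-1/2} e^{-σᵢ²/2}` (`gaussian_Icc_lower`).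

Dividing, `M₂ / P² ≤ (π e / 2)^N e^{∑ σᵢ²}`, and `∑ σᵢ²` is a constant multiple of `γ₀`.
-/

open MeasureTheory ProbabilityTheory Finset Real Filter

/-- A centered interval has standard Gaussian mass at least its length times the density at its
endpoints, where the density is smallest; for `s ≤ 0` the left side truncates to `0`. -/
lemma gaussian_Icc_lower (s : ℝ) :
    ENNReal.ofReal (2 * s * ((1 / √(2 * π)) * Real.exp (-s ^ 2 / 2)))
      ≤ gaussianReal 0 1 (Set.Icc (-s) s) := by
  rw [gaussianReal_apply 0 one_ne_zero]
  calc ENNReal.ofReal (2 * s * ((1 / √(2 * π)) * Real.exp (-s ^ 2 / 2)))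
      = ∫⁻ _ in Set.Icc (-s) s, ENNReal.ofReal ((1 / √(2 * π)) * Real.exp (-s ^ 2 / 2)) := by
        rw [setLIntegral_const, Real.volume_Icc, ← ENNReal.ofReal_mul (by positivity)]
        congr 1
        ring
    _ ≤ ∫⁻ x in Set.Icc (-s) s, gaussianPDF 0 1 x := by
        refine setLIntegral_mono (measurable_gaussianPDF 0 1) fun x hx => ?_
        rw [gaussianPDF, gaussianPDFReal]
        apply ENNReal.ofReal_le_ofReal
        have hx2 : x ^ 2 ≤ s ^ 2 := sq_le_sq' hx.1 hx.2
        simp only [NNReal.coe_one, mul_one, sub_zero, one_div]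
        gcongr

/-- Remark 2: bounded relative error with explicit constant in
the zero-mean case: with `α = 0` and biasing variances `σ i (γ₀)² = γ₀/(N lam i)`,
`limsup_{γ₀ → 0⁺} M₂(γ₀)/P(γ₀)² ≤ (π e / 2)^N`. -/
theorem bounded_relative_error_zero_mean
    (N : ℕ) (hN : 1 ≤ N)
    (lam : Fin N → ℝ) (hlam : ∀ i, 0 < lam i)
    (α : Fin N → ℝ) (hα : ∀ i, α i = 0)
    (σ : ℝ → Fin N → ℝ) (hσ : ∀ γ₀ i, σ γ₀ i = Real.sqrt (γ₀ / (N * lam i)))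
    (f : ℝ → ℝ) (hf : ∀ x, f x = (1 / Real.sqrt (2 * Real.pi)) * Real.exp (-x ^ 2 / 2))
    (fstar : ℝ → Fin N → ℝ → ℝ)
    (hfstar : ∀ γ₀ i x, fstar γ₀ i x
      = (1 / (Real.sqrt (2 * Real.pi) * σ γ₀ i)) * Real.exp (-x ^ 2 / (2 * σ γ₀ i ^ 2)))
    (L : ℝ → (Fin N → ℝ) → ℝ)
    (hL : ∀ γ₀ z, L γ₀ z = ∏ i, f (z i) / fstar γ₀ i (z i))
    (P : ℝ → ENNReal)
    (hP : ∀ γ₀, P γ₀ = (Measure.pi fun _ : Fin N => gaussianReal 0 1)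
        {z : Fin N → ℝ | ∑ i, lam i * z i ^ 2 ≤ γ₀})
    (M₂ : ℝ → ENNReal)
    (hM₂ : ∀ γ₀, M₂ γ₀ = ∫⁻ z : Fin N → ℝ,
        Set.indicator {y : Fin N → ℝ | ∑ i, lam i * y i ^ 2 ≤ γ₀}
          (fun y => ENNReal.ofReal (L γ₀ y ^ 2)) z
        ∂(Measure.pi fun i : Fin N => gaussianReal 0 ((σ γ₀ i ^ 2).toNNReal))) :
    Filter.limsup (fun γ₀ => M₂ γ₀ / (P γ₀) ^ 2) (nhdsWithin 0 (Set.Ioi 0))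
      ≤ ENNReal.ofReal ((Real.pi * Real.exp 1 / 2) ^ N) := by
  have hNpos : (0 : ℝ) < N := by exact_mod_cast hN
  have key : ∀ γ₀ : ℝ, 0 < γ₀ → M₂ γ₀ / (P γ₀) ^ 2 ≤
      ENNReal.ofReal ((π * Real.exp 1 / 2) ^ N * Real.exp (∑ i, γ₀ / (N * lam i))) := by
    intro γ hγ
    have hσpos : ∀ i, 0 < σ γ i := fun i => by
      rw [hσ]
      exact Real.sqrt_pos.2 (div_pos hγ (mul_pos hNpos (hlam i)))
    have hσsq : ∀ i, σ γ i ^ 2 = γ / (N * lam i) := fun i => by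
      rw [hσ]
      exact Real.sq_sqrt (div_pos hγ (mul_pos hNpos (hlam i))).le
    have hlamσ : ∀ i, lam i * σ γ i ^ 2 = γ / N := fun i => by
      rw [hσsq]
      have := (hlam i).ne'
      field_simp
    have hlr : ∀ i x, f x / fstar γ i x =
        σ γ i * Real.exp (x ^ 2 / (2 * σ γ i ^ 2) - x ^ 2 / 2) := by
      intro i x
      have h1 := (hσpos i).ne'
      have h2 : √(2 * π) ≠ 0 := by positivity
      rw [hf, hfstar, Real.exp_sub, neg_div, neg_div, Real.exp_neg, Real.exp_neg]
      field_simp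
    have hLbound : ∀ z : Fin N → ℝ, ∑ i, lam i * z i ^ 2 ≤ γ →
        L γ z ^ 2 ≤ ∏ i, (σ γ i ^ 2 * Real.exp 1) := by
      intro z hz
      have hexp : ∑ i, (z i ^ 2 / (2 * σ γ i ^ 2) - z i ^ 2 / 2) ≤ (N : ℝ) / 2 := by
        calc ∑ i, (z i ^ 2 / (2 * σ γ i ^ 2) - z i ^ 2 / 2)
            ≤ ∑ i, (N / (2 * γ)) * (lam i * z i ^ 2) := by
              refine Finset.sum_le_sum fun i _ => ?_
              have h : z i ^ 2 / (2 * σ γ i ^ 2) = (N / (2 * γ)) * (lam i * z i ^ 2) := by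
                rw [hσsq]
                have := (hlam i).ne'
                field_simp
              rw [h]
              have := sq_nonneg (z i)
              linarith
          _ = (N / (2 * γ)) * ∑ i, lam i * z i ^ 2 := by rw [Finset.mul_sum]
          _ ≤ (N / (2 * γ)) * γ := by gcongr
          _ = N / 2 := by field_simp
      have hσprod : 0 ≤ ∏ i, σ γ i := Finset.prod_nonneg fun i _ => (hσpos i).le
      have hL' : L γ z ≤ (∏ i, σ γ i) * Real.exp (N / 2) := by
        rw [hL]
        simp_rw [hlr]
        rw [Finset.prod_mul_distrib, ← Real.exp_sum]
        gcongr
      have hL0 : 0 ≤ L γ z := by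
        rw [hL]
        simp_rw [hlr]
        exact Finset.prod_nonneg fun i _ => mul_nonneg (hσpos i).le (Real.exp_pos _).le
      calc L γ z ^ 2 ≤ ((∏ i, σ γ i) * Real.exp (N / 2)) ^ 2 := by gcongr
        _ = ∏ i, (σ γ i ^ 2 * Real.exp 1) := by
          rw [Finset.prod_mul_distrib, Finset.prod_pow, mul_pow, Finset.prod_const,
            ← Real.exp_nat_mul, ← Real.exp_nat_mul]
          congr 2
          simp
          ring
    have hM : M₂ γ ≤ ENNReal.ofReal (∏ i, (σ γ i ^ 2 * Real.exp 1)) := by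
      rw [hM₂]
      refine (lintegral_mono (g := fun _ => ENNReal.ofReal (∏ i, (σ γ i ^ 2 * Real.exp 1)))
        fun z => ?_).trans ?_
      · exact Set.indicator_apply_le' (fun hz => ENNReal.ofReal_le_ofReal (hLbound z hz))
          (fun _ => zero_le)
      · simp
    set q : ℝ := ∏ i, (2 * σ γ i * ((1 / √(2 * π)) * Real.exp (-(σ γ i) ^ 2 / 2))) with hq
    have hqpos : 0 < q := Finset.prod_pos fun i _ => by
      have := hσpos i
      positivity
    have hPl : ENNReal.ofReal q ≤ P γ := by
      rw [hP, hq, ENNReal.ofReal_prod_of_nonneg fun i _ => by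
        have := hσpos i
        positivity]
      calc _ ≤ ∏ i, gaussianReal 0 1 (Set.Icc (-(σ γ i)) (σ γ i)) :=
            Finset.prod_le_prod' fun i _ => gaussian_Icc_lower _
        _ = (Measure.pi fun _ : Fin N => gaussianReal 0 1)
              (Set.univ.pi fun i => Set.Icc (-(σ γ i)) (σ γ i)) := (Measure.pi_pi _ _).symm
        _ ≤ _ := by
          refine measure_mono fun z hz => ?_
          calc ∑ i, lam i * z i ^ 2 ≤ ∑ _i : Fin N, γ / N := by
                refine Finset.sum_le_sum fun i _ => ?_
                rw [← hlamσ i]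
                have h := hz i (Set.mem_univ i)
                exact mul_le_mul_of_nonneg_left (sq_le_sq' h.1 h.2) (hlam i).le
            _ = γ := by
                simp
                field_simp
    calc M₂ γ / (P γ) ^ 2
        ≤ ENNReal.ofReal (∏ i, (σ γ i ^ 2 * Real.exp 1)) / (ENNReal.ofReal q) ^ 2 := by
          gcongr
      _ = ENNReal.ofReal ((∏ i, (σ γ i ^ 2 * Real.exp 1)) / q ^ 2) := by
          rw [← ENNReal.ofReal_pow hqpos.le, ENNReal.ofReal_div_of_pos (by positivity)]
      _ = _ := by
          congr 1
          rw [hq, ← Finset.prod_pow, ← Finset.prod_div_distrib, Real.exp_sum]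
          have hconst : (π * Real.exp 1 / 2) ^ N = ∏ _i : Fin N, (π * Real.exp 1 / 2) := by
            rw [Finset.prod_const, Finset.card_univ, Fintype.card_fin]
          rw [hconst, ← Finset.prod_mul_distrib]
          refine Finset.prod_congr rfl fun i _ => ?_
          rw [← hσsq]
          have h1 := (hσpos i).ne'
          have h2 : √(2 * π) ^ 2 = 2 * π := Real.sq_sqrt (by positivity)
          have h3 : Real.exp (-(σ γ i) ^ 2 / 2) ^ 2 = (Real.exp ((σ γ i) ^ 2))⁻¹ := by
            rw [← Real.exp_nat_mul, ← Real.exp_neg]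
            congr 1
            push_cast
            ring
          rw [mul_pow, mul_pow, mul_pow, div_pow, h2, h3]
          field_simp
  have hlim : Tendsto (fun γ₀ : ℝ =>
      ENNReal.ofReal ((π * Real.exp 1 / 2) ^ N * Real.exp (∑ i, γ₀ / (N * lam i))))
      (nhdsWithin 0 (Set.Ioi 0)) (nhds (ENNReal.ofReal ((π * Real.exp 1 / 2) ^ N))) := by
    apply ENNReal.tendsto_ofReal
    have hc : Continuous fun γ₀ : ℝ =>
        (π * Real.exp 1 / 2) ^ N * Real.exp (∑ i, γ₀ / (N * lam i)) := by fun_prop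
    have h := (hc.tendsto 0).mono_left (nhdsWithin_le_nhds (s := Set.Ioi 0))
    simpa using h
  rw [← hlim.limsup_eq]
  refine limsup_le_limsup ?_
  filter_upwards [self_mem_nhdsWithin] with γ hγ using key γ hγ
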